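/- arXiv:2204.10317 — 2 statements merged into one kernel-verified Lean document; each statement's English description precedes it below -/
import Mathlib

section
/- For every finite simple graph G (with at least one edge), v(G) = i_ve(G), where v(G) is the minimum cardinality of an independent set A such that N_G(A) is a minimal vertex cover, and i_ve(G) is the minimum cardinality of an independent vertex-wise dominating set of G. -/
/-- `S` is an independent set of the graph `G`. -/
def IsIndepSet {V : Type*} (G : SimpleGraph V) (S : Set V) : Prop :=
  ∀ x ∈ S, ∀ y ∈ S, ¬ G.Adj x y

/-- `u` vertex-wise dominates the edge `xy`: `u ∈ N_G[x] ∪ N_G[y]`. -/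
def VeDominates {V : Type*} (G : SimpleGraph V) (u x y : V) : Prop :=
  u = x ∨ u = y ∨ G.Adj u x ∨ G.Adj u y

/-- `S` is a vertex-wise dominating set of `G`. -/
def IsVeDomSet {V : Type*} (G : SimpleGraph V) (S : Set V) : Prop :=
  ∀ x y : V, G.Adj x y → ∃ s ∈ S, VeDominates G s x y

/-- `W` is a vertex cover of `G`. -/
def IsVertexCover {V : Type*} (G : SimpleGraph V) (W : Set V) : Prop :=
  ∀ x y : V, G.Adj x y → x ∈ W ∨ y ∈ W

/-- `W` is a minimal vertex cover of `G`. -/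
def IsMinVertexCover {V : Type*} (G : SimpleGraph V) (W : Set V) : Prop :=
  IsVertexCover G W ∧ ∀ W' ⊂ W, ¬ IsVertexCover G W'

/-- `N_G(A) = ⋃_{a ∈ A} N_G(a)`. -/
def nbhdSet {V : Type*} (G : SimpleGraph V) (A : Set V) : Set V :=
  {v : V | ∃ a ∈ A, G.Adj a v}

/-- The v-number of a graph `G`: the minimum cardinality of an independent
set `A` such that `N_G(A)` is a minimal vertex cover. -/
noncomputable def vNumber {V : Type*} [Fintype V] [DecidableEq V]
    (G : SimpleGraph V) : ℕ :=
  sInf {n : ℕ | ∃ A : Finset V,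
    IsIndepSet G ↑A ∧ IsMinVertexCover G (nbhdSet G ↑A) ∧ A.card = n}

/-- The independent vertex-wise domination number `i_ve(G)`. -/
noncomputable def iVe {V : Type*} [Fintype V] [DecidableEq V]
    (G : SimpleGraph V) : ℕ :=
  sInf {n : ℕ | ∃ S : Finset V,
    IsIndepSet G ↑S ∧ IsVeDomSet G ↑S ∧ S.card = n}

/-!
The two minima run over the same family of sets. For any `A`, the set `N_G(A)` covers an edge
exactly when some vertex of `A` vertex-wise dominates it: an endpoint lying in `A` puts the other
endpoint in `N_G(A)`. If `A` is independent, then `N_G(A)` misses `A`, so a vertex cover inside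
`N_G(A)` has to pick, from each edge joining `A` to `N_G(A)`, the endpoint in `N_G(A)`; hence it is
all of `N_G(A)`.
-/

section

variable {V : Type*} {G : SimpleGraph V} {A W : Set V}

theorem isVertexCover_nbhdSet_iff_isVeDomSet :
    IsVertexCover G (nbhdSet G A) ↔ IsVeDomSet G A := by
  constructor
  · intro hcover x y hxy
    rcases hcover x y hxy with ⟨a, ha, hax⟩ | ⟨a, ha, hay⟩
    · exact ⟨a, ha, .inr (.inr (.inl hax))⟩
    · exact ⟨a, ha, .inr (.inr (.inr hay))⟩
  · intro hdom x y hxy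
    obtain ⟨a, ha, rfl | rfl | hax | hay⟩ := hdom x y hxy
    · exact .inr ⟨a, ha, hxy⟩
    · exact .inl ⟨a, ha, hxy.symm⟩
    · exact .inl ⟨a, ha, hax⟩
    · exact .inr ⟨a, ha, hay⟩

theorem IsIndepSet.disjoint_nbhdSet (hA : IsIndepSet G A) : Disjoint A (nbhdSet G A) :=
  Set.disjoint_left.2 fun x hx ⟨a, ha, hax⟩ => hA a ha x hx hax

theorem IsVertexCover.nbhdSet_subset (hW : IsVertexCover G W) (hAW : Disjoint A W) :
    nbhdSet G A ⊆ W :=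
  fun v ⟨a, ha, hav⟩ => (hW a v hav).resolve_left (Set.disjoint_left.1 hAW ha)

theorem IsIndepSet.isMinVertexCover_nbhdSet_iff_isVertexCover (hA : IsIndepSet G A) :
    IsMinVertexCover G (nbhdSet G A) ↔ IsVertexCover G (nbhdSet G A) :=
  and_iff_left fun _ hW hcover =>
    hW.not_subset (hcover.nbhdSet_subset (hA.disjoint_nbhdSet.mono_right hW.subset))

theorem IsIndepSet.isMinVertexCover_nbhdSet_iff_isVeDomSet (hA : IsIndepSet G A) :
    IsMinVertexCover G (nbhdSet G A) ↔ IsVeDomSet G A :=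
  hA.isMinVertexCover_nbhdSet_iff_isVertexCover.trans isVertexCover_nbhdSet_iff_isVeDomSet

end

/-- For every finite simple graph `G` with at least one edge,
`v(G) = i_ve(G)`. -/
theorem vNumber_eq_iVe {V : Type*} [Fintype V] [DecidableEq V]
    (G : SimpleGraph V) (hedge : ∃ x y : V, G.Adj x y) :
    vNumber G = iVe G := by
  have feasible_iff (n : ℕ) (A : Finset V) :
      (IsIndepSet G ↑A ∧ IsMinVertexCover G (nbhdSet G ↑A) ∧ A.card = n) ↔
        (IsIndepSet G ↑A ∧ IsVeDomSet G ↑A ∧ A.card = n) :=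
    and_congr_right fun hA => and_congr_left' hA.isMinVertexCover_nbhdSet_iff_isVeDomSet
  simp only [vNumber, iVe, feasible_iff]
end

section
/- Let P_4 be the path graph on 4 vertices. Then v(P_4) = 1 and β(Ind(P_4)) = 2; in particular the inequality v(X) ≤ β(X) can be strict even for independence complexes of graphs. -/
open scoped Classical

/-- The independence complex of `G`. -/
def indComplex {V : Type*} (G : SimpleGraph V) : Set (Finset V) :=
  {A : Finset V | IsIndepSet G ↑A}

/-- The link of a face `A` in a complex `X`. -/
def link {V : Type*} [DecidableEq V] (X : Set (Finset V)) (A : Finset V) :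
    Set (Finset V) :=
  {T : Finset V | T ∈ X ∧ A ∩ T = ∅ ∧ T ∪ A ∈ X}

/-- A family `Y` of finite sets is a simplex if the union of all its members
is itself a member. -/
def IsSimplex {V : Type*} [Fintype V] (Y : Set (Finset V)) : Prop :=
  Finset.univ.filter (fun v => ∃ T ∈ Y, v ∈ T) ∈ Y

/-- `β(X)`: the maximum cardinality of a face `A` which is minimal (under
inclusion) with the property that `lk(X;A)` is a simplex. -/
noncomputable def betaNumber {V : Type*} [Fintype V] [DecidableEq V]
    (X : Set (Finset V)) : ℕ :=
  sSup {n : ℕ | ∃ A : Finset V,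
    (A ∈ X ∧ IsSimplex (link X A) ∧ ∀ B ⊂ A, ¬ IsSimplex (link X B)) ∧ A.card = n}

/-!
For an independent set `A`, the link of `A` in `Ind(G)` is the independence complex of
`G ∖ (A ∪ N(A))`, which is a simplex exactly when that graph has no edges, i.e. when `N(A)` is a
vertex cover. Such a vertex cover is automatically minimal, because an edge from `A` to a removed
vertex would be uncovered. Thus `v(G)` and `β(Ind(G))` are governed by the same family of sets `A`:
the former minimizes `|A|` over the family, the latter maximizes `|A|` over its inclusion-minimal
members. In the path `0 - 1 - 2 - 3` both `{1}` and `{0, 3}` are inclusion-minimal members.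
-/

section Graph

variable {V : Type*} {G : SimpleGraph V}

theorem IsIndepSet.mono {S T : Set V} (hT : IsIndepSet G T) (hST : S ⊆ T) : IsIndepSet G S :=
  fun x hx y hy => hT x (hST hx) y (hST hy)

theorem isIndepSet_singleton (v : V) : IsIndepSet G {v} := by
  rintro x rfl y rfl
  exact G.irrefl

theorem isIndepSet_union_iff {S T : Set V} :
    IsIndepSet G (S ∪ T) ↔
      IsIndepSet G S ∧ IsIndepSet G T ∧ Disjoint S (nbhdSet G T) := by
  constructor
  · intro h
    refine ⟨h.mono Set.subset_union_left, h.mono Set.subset_union_right, ?_⟩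
    rw [Set.disjoint_left]
    rintro x hx ⟨t, ht, htx⟩
    exact h t (Or.inr ht) x (Or.inl hx) htx
  · rintro ⟨hS, hT, hdisj⟩ x (hx | hx) y (hy | hy) hxy
    · exact hS x hx y hy hxy
    · exact Set.disjoint_left.1 hdisj hx ⟨y, hy, hxy.symm⟩
    · exact Set.disjoint_left.1 hdisj hy ⟨x, hx, hxy⟩
    · exact hT x hx y hy hxy

theorem IsVertexCover.mono {W W' : Set V} (hW : IsVertexCover G W) (h : W ⊆ W') :
    IsVertexCover G W' :=
  fun x y hxy => (hW x y hxy).imp (@h x) (@h y)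

theorem nbhdSet_mono {A B : Set V} (h : A ⊆ B) : nbhdSet G A ⊆ nbhdSet G B :=
  fun _ ⟨a, ha, hav⟩ => ⟨a, h ha, hav⟩

theorem IsIndepSet.isMinVertexCover_nbhdSet {A : Set V} (hA : IsIndepSet G A)
    (hcover : IsVertexCover G (nbhdSet G A)) : IsMinVertexCover G (nbhdSet G A) := by
  refine ⟨hcover, fun W hW hWcover => hW.not_subset ?_⟩
  rintro v ⟨a, ha, hav⟩
  have ha_notMem : a ∉ W := fun haW =>
    have ⟨b, hb, hba⟩ := hW.subset haW
    hA b hb a ha hba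
  exact (hWcover a v hav).resolve_left ha_notMem

theorem vNumber_eq_one [Fintype V] [DecidableEq V] {a x y : V} (hxy : G.Adj x y)
    (ha : IsVertexCover G (nbhdSet G {a})) : vNumber G = 1 := by
  refine IsLeast.csInf_eq ⟨⟨{a}, ?_⟩, ?_⟩
  · rw [Finset.coe_singleton]
    have hindep : IsIndepSet G {a} := isIndepSet_singleton a
    exact ⟨hindep, hindep.isMinVertexCover_nbhdSet ha, Finset.card_singleton a⟩
  · rintro _ ⟨A, -, hA, rfl⟩
    have hA_nonempty : A.Nonempty := by
      rcases hA.1 x y hxy with ⟨b, hb, -⟩ | ⟨b, hb, -⟩ <;> exact ⟨b, hb⟩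
    exact hA_nonempty.card_pos

end Graph

section Complex

variable {V : Type*} [Fintype V]

theorem isSimplex_iff_exists_isGreatest {Y : Set (Finset V)} :
    IsSimplex Y ↔ ∃ F, IsGreatest Y F := by
  constructor
  · intro h
    exact ⟨_, h, fun T hT v hv => Finset.mem_filter.2 ⟨Finset.mem_univ v, T, hT, hv⟩⟩
  · rintro ⟨F, hF, hF_upper⟩
    have hunion : Finset.univ.filter (fun v => ∃ T ∈ Y, v ∈ T) = F := by
      ext v
      simp only [Finset.mem_filter, Finset.mem_univ, true_and]
      exact ⟨fun ⟨T, hT, hv⟩ => hF_upper hT hv, fun hv => ⟨F, hF, hv⟩⟩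
    rwa [IsSimplex, hunion]

theorem betaNumber_eq_card [DecidableEq V] {X : Set (Finset V)} {A : Finset V} (hA : A ∈ X)
    (hsimplex : IsSimplex (link X A)) (hmin : ∀ B ⊂ A, ¬ IsSimplex (link X B))
    (hmax : ∀ B ∈ X, B.card ≤ A.card) : betaNumber X = A.card := by
  refine IsGreatest.csSup_eq ⟨⟨A, ⟨hA, hsimplex, hmin⟩, rfl⟩, ?_⟩
  rintro _ ⟨B, ⟨hB, -⟩, rfl⟩
  exact hmax B hB

end Complex

section IndependenceComplex

variable {V : Type*} [DecidableEq V] {G : SimpleGraph V} {A T : Finset V}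

theorem mem_link_indComplex_iff :
    T ∈ link (indComplex G) A ↔
      IsIndepSet G (A : Set V) ∧ IsIndepSet G (T : Set V) ∧ Disjoint A T ∧
        Disjoint (T : Set V) (nbhdSet G A) := by
  change IsIndepSet G ↑T ∧ A ∩ T = ∅ ∧ IsIndepSet G ↑(T ∪ A) ↔ _
  rw [Finset.coe_union, isIndepSet_union_iff, ← Finset.disjoint_iff_inter_eq_empty]
  tauto

variable [Fintype V]

theorem isSimplex_link_indComplex_iff :
    IsSimplex (link (indComplex G) A) ↔
      IsIndepSet G (A : Set V) ∧ IsVertexCover G (nbhdSet G A) := by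
  rw [isSimplex_iff_exists_isGreatest]
  constructor
  · rintro ⟨F, hF, hF_upper⟩
    obtain ⟨hA, hF_indep, -⟩ := mem_link_indComplex_iff.1 hF
    refine ⟨hA, fun x y hxy => ?_⟩
    by_contra! ⟨hx, hy⟩
    have mem_F {v w : V} (hvw : G.Adj v w) (hv : v ∉ nbhdSet G A) (hw : w ∉ nbhdSet G A) :
        v ∈ F := by
      have hvA : v ∉ A := fun hvA => hw ⟨v, hvA, hvw⟩
      have hv_link : {v} ∈ link (indComplex G) A := by
        simp [mem_link_indComplex_iff, hA, isIndepSet_singleton, hvA, hv]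
      exact hF_upper hv_link (Finset.mem_singleton_self v)
    exact hF_indep x (mem_F hxy hx hy) y (mem_F hxy.symm hy hx) hxy
  · rintro ⟨hA, hcover⟩
    refine ⟨Finset.univ.filter fun v => v ∉ A ∧ v ∉ nbhdSet G A, ?_, ?_⟩
    · rw [mem_link_indComplex_iff]
      refine ⟨hA, fun x hx y hy hxy => ?_, ?_, ?_⟩
      · have hx' := (Finset.mem_filter.1 hx).2.2
        have hy' := (Finset.mem_filter.1 hy).2.2
        exact (hcover x y hxy).elim hx' hy'
      · exact Finset.disjoint_right.2 fun v hv => (Finset.mem_filter.1 hv).2.1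
      · exact Set.disjoint_left.2 fun v hv => (Finset.mem_filter.1 hv).2.2
    · intro T hT v hv
      obtain ⟨-, -, hAT, hT_nbhd⟩ := mem_link_indComplex_iff.1 hT
      exact Finset.mem_filter.2 ⟨Finset.mem_univ v, Finset.disjoint_right.1 hAT hv,
        Set.disjoint_left.1 hT_nbhd hv⟩

theorem not_isSimplex_link_indComplex_of_ssubset {B : Finset V}
    (herase : ∀ a ∈ A, ¬ IsVertexCover G (nbhdSet G (A.erase a))) (hBA : B ⊂ A) :
    ¬ IsSimplex (link (indComplex G) B) := by
  intro hB
  obtain ⟨a, ha, hBa⟩ := Finset.ssubset_iff_exists_subset_erase.1 hBA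
  have hcover := (isSimplex_link_indComplex_iff.1 hB).2
  exact herase a ha (hcover.mono (nbhdSet_mono (Finset.coe_subset.2 hBa)))

end IndependenceComplex

section PathGraph

theorem isVertexCover_pathGraph_succ_iff {n : ℕ} {W : Set (Fin (n + 1))} :
    IsVertexCover (SimpleGraph.pathGraph (n + 1)) W ↔
      ∀ i : Fin n, i.castSucc ∈ W ∨ i.succ ∈ W := by
  constructor
  · intro hW i
    exact hW _ _ (by simp [SimpleGraph.pathGraph_adj])
  · intro hW
    have cover_of_lt {x y : Fin (n + 1)} (hxy : x.val + 1 = y.val) : x ∈ W ∨ y ∈ W := by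
      have hx : x.val < n := by lia
      have hy : y = Fin.succ ⟨x, hx⟩ := Fin.ext hxy.symm
      rw [hy]
      exact hW ⟨x, hx⟩
    intro x y hxy
    rcases SimpleGraph.pathGraph_adj.1 hxy with hxy | hyx
    · exact cover_of_lt hxy
    · exact (cover_of_lt hyx).symm

theorem isVertexCover_nbhdSet_pathGraph_succ_iff {n : ℕ} {A : Finset (Fin (n + 1))} :
    IsVertexCover (SimpleGraph.pathGraph (n + 1)) (nbhdSet (SimpleGraph.pathGraph (n + 1)) A) ↔
      ∀ i : Fin n, ∃ a ∈ A, i.val ≤ a.val + 1 ∧ a.val ≤ i.val + 2 := by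
  simp only [isVertexCover_pathGraph_succ_iff, nbhdSet, Set.mem_ofPred_eq, Finset.mem_coe,
    SimpleGraph.pathGraph_adj, Fin.val_castSucc, Fin.val_succ, ← exists_or, ← and_or_left]
  refine forall_congr' fun i => exists_congr fun a => and_congr_right fun _ => ?_
  lia

-- At most one of the consecutive vertices `2k` and `2k + 1` lies in an independent set.
theorem IsIndepSet.card_le_of_pathGraph {n : ℕ} {A : Finset (Fin n)}
    (hA : IsIndepSet (SimpleGraph.pathGraph n) A) : A.card ≤ (n + 1) / 2 := by
  have hmaps : Set.MapsTo (fun x : Fin n => x.val / 2) A (Finset.range ((n + 1) / 2)) := by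
    intro x _
    simp only [Finset.coe_range, Set.mem_Iio]
    lia
  have hinj : Set.InjOn (fun x : Fin n => x.val / 2) A := by
    intro x hx y hy hxy
    have hnot_adj := hA x hx y hy
    rw [SimpleGraph.pathGraph_adj] at hnot_adj
    ext
    lia
  simpa only [Finset.card_range] using Finset.card_le_card_of_injOn _ hmaps hinj

end PathGraph

/-- For the path graph `P₄` on four vertices,
`v(P₄) = 1` and `β(Ind(P₄)) = 2`; in particular the inequality
`v(X) ≤ β(X)` can be strict even for independence complexes of graphs. -/
theorem vNumber_pathGraph_four_and_betaNumber :
    vNumber (SimpleGraph.pathGraph 4) = 1 ∧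
    betaNumber (indComplex (SimpleGraph.pathGraph 4)) = 2 := by
  constructor
  · have adj : (SimpleGraph.pathGraph 4).Adj 0 1 := by simp [SimpleGraph.pathGraph_adj]
    refine vNumber_eq_one (a := 1) adj ?_
    rw [← Finset.coe_singleton, isVertexCover_nbhdSet_pathGraph_succ_iff]
    decide
  · let A : Finset (Fin 4) := {0, 3}
    have indep : IsIndepSet (SimpleGraph.pathGraph 4) A := by
      simp only [IsIndepSet, SimpleGraph.pathGraph_adj, Finset.mem_coe]
      decide
    have cover : IsVertexCover (SimpleGraph.pathGraph 4) (nbhdSet (SimpleGraph.pathGraph 4) A) := by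
      rw [isVertexCover_nbhdSet_pathGraph_succ_iff]
      decide
    have not_cover_erase : ∀ a ∈ A, ¬ IsVertexCover (SimpleGraph.pathGraph 4)
        (nbhdSet (SimpleGraph.pathGraph 4) (A.erase a)) := by
      simp only [isVertexCover_nbhdSet_pathGraph_succ_iff]
      decide
    exact betaNumber_eq_card indep (isSimplex_link_indComplex_iff.2 ⟨indep, cover⟩)
      (fun _ => not_isSimplex_link_indComplex_of_ssubset not_cover_erase)
      (fun _ => IsIndepSet.card_le_of_pathGraph)
end
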